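/- For every integer k ≥ 1, the coefficient C_{k+1,1} satisfies the alternative recurrence C_{k+1,1} = Σ_{ℓ=1}^{k} ε_ℓ · A^{(ℓ−1)}_{k+1,ℓ} · C_{ℓ,1}, where C_{1,1} = 1. -/

import Mathlib

open Finset

/-- Product of adjacency factors along a path `ℓ → j₁ → ⋯ → jₚ → k`:
for each consecutive pair `(a, b)` in the list, a factor `A^{(a-1)}_{b,a}`. -/
def pathProd {R : Type*} [CommRing R] (A : ℕ → ℕ → ℕ → R) : List ℕ → R
  | [] => 1
  | [_] => 1
  | a :: b :: rest => A (a - 1) b a * pathProd A (b :: rest)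

/-- The quantity `𝒜_{k,ℓ}(Q)` for a subset `Q = {j₁ < ⋯ < jₚ} ⊆ {ℓ+1,…,k−1}`. -/
def calA {R : Type*} [CommRing R] (ε : ℕ → R) (A : ℕ → ℕ → ℕ → R)
    (k ℓ : ℕ) (Q : Finset ℕ) : R :=
  (ε ℓ * ∏ j ∈ Q, ε j) * pathProd A (ℓ :: ((Q.sort (· ≤ ·)) ++ [k]))

/-- The coefficients `C_{k,ℓ}`: `C_{k,k} = 1` and, for `k > ℓ`,
`C_{k,ℓ} = Σ_{Q ⊆ {ℓ+1,…,k−1}} 𝒜_{k,ℓ}(Q)`. -/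
def Cgen {R : Type*} [CommRing R] (ε : ℕ → R) (A : ℕ → ℕ → ℕ → R) (k ℓ : ℕ) : R :=
  if k = ℓ then 1 else ∑ Q ∈ (Finset.Ioo ℓ k).powerset, calA ε A k ℓ Q

/-- The modified weight `λ̂ₖ = Σ_{ℓ=1}^{k} C_{k,ℓ} λ_ℓ`. -/
def lamHat {R : Type*} [CommRing R] (ε : ℕ → R) (A : ℕ → ℕ → ℕ → R)
    (lam : ℕ → R) (k : ℕ) : R :=
  ∑ ℓ ∈ Finset.Icc 1 k, Cgen ε A k ℓ * lam ℓ

/-!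
A nonempty subset of `{ℓ+1,…,k}` is `Q ∪ {m}` with `m` its largest element and `Q ⊆ {ℓ+1,…,m-1}`.
The path `ℓ → ⋯ → k+1` it defines factors at `m` into the path of `Q` from `ℓ` to `m` and the single
edge `m → k+1`, so summing over `Q` produces `C_{m,ℓ}`. The empty subset is the edge `ℓ → k+1` and
contributes the term of `C_{ℓ,ℓ} = 1`.
-/

theorem sort_insert_eq_append {α : Type*} [DecidableEq α] (r : α → α → Prop) [DecidableRel r]
    [IsTrans α r] [Std.Antisymm r] [Std.Total r] {s : Finset α} {a : α}
    (hr : ∀ b ∈ s, r b a) (ha : a ∉ s) :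
    (insert a s).sort r = s.sort r ++ [a] := by
  have hnodup : (s.sort r ++ [a]).Nodup := by
    simpa [List.nodup_append] using fun b hb (hba : b = a) => ha (hba ▸ hb)
  have hsorted : (s.sort r ++ [a]).Pairwise r := by
    simpa [List.pairwise_append] using hr
  have htoFinset : (s.sort r ++ [a]).toFinset = insert a s := by
    simp [List.toFinset_append, union_comm s]
  rw [← htoFinset, (List.toFinset_sort r hnodup).2 hsorted]

theorem sum_powerset_eq_add_sum_insert_max {α M : Type*} [LinearOrder α] [AddCommMonoid M]
    (s : Finset α) (f : Finset α → M) :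
    ∑ t ∈ s.powerset, f t = f ∅ + ∑ m ∈ s, ∑ t ∈ {a ∈ s | a < m}.powerset, f (insert m t) := by
  induction s using Finset.induction_on_max with
  | empty => simp
  | insert m s hlt ih =>
    have hm : m ∉ s := fun h => (hlt m h).false
    have filter_max : {a ∈ insert m s | a < m} = s := by
      rw [filter_insert, if_neg (lt_irrefl m), filter_true_of_mem hlt]
    have sum_below : ∑ b ∈ s, ∑ t ∈ {a ∈ insert m s | a < b}.powerset, f (insert b t) =
        ∑ b ∈ s, ∑ t ∈ {a ∈ s | a < b}.powerset, f (insert b t) :=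
      sum_congr rfl fun b hb => by rw [filter_insert, if_neg (hlt b hb).not_gt]
    rw [sum_powerset_insert hm, ih, sum_insert hm, filter_max, sum_below, add_right_comm, add_assoc]

section Recurrence

variable {R : Type*} [CommRing R] (ε : ℕ → R) (A : ℕ → ℕ → ℕ → R)

theorem pathProd_append_cons (m : ℕ) (L₂ : List ℕ) :
    ∀ L₁ : List ℕ, pathProd A (L₁ ++ m :: L₂) = pathProd A (L₁ ++ [m]) * pathProd A (m :: L₂)
  | [] => by simp [pathProd]
  | [a] => by simp [pathProd]
  | a :: b :: L₁ => by
    have ih := pathProd_append_cons m L₂ (b :: L₁)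
    simp only [List.cons_append, pathProd] at ih ⊢
    rw [ih, mul_assoc]

theorem calA_empty (k ℓ : ℕ) : calA ε A k ℓ ∅ = ε ℓ * A (ℓ - 1) k ℓ := by
  simp [calA, pathProd]

theorem calA_insert_max (k ℓ : ℕ) {m : ℕ} {Q : Finset ℕ} (hQ : ∀ j ∈ Q, j < m) :
    calA ε A k ℓ (insert m Q) = ε m * A (m - 1) k m * calA ε A m ℓ Q := by
  have hm : m ∉ Q := fun h => (hQ m h).false
  have hsort : (insert m Q).sort (· ≤ ·) = Q.sort (· ≤ ·) ++ [m] :=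
    sort_insert_eq_append (· ≤ ·) (fun j hj => (hQ j hj).le) hm
  have hpath : pathProd A (ℓ :: (Q.sort (· ≤ ·) ++ [m] ++ [k])) =
      pathProd A (ℓ :: (Q.sort (· ≤ ·) ++ [m])) * A (m - 1) k m := by
    simpa [pathProd] using pathProd_append_cons A m [k] (ℓ :: Q.sort (· ≤ ·))
  rw [calA, calA, prod_insert hm, hsort, hpath]
  ring

theorem Cgen_self (k : ℕ) : Cgen ε A k k = 1 := if_pos rfl

theorem Cgen_of_lt {k ℓ : ℕ} (h : ℓ < k) :
    Cgen ε A k ℓ = ∑ Q ∈ (Ioo ℓ k).powerset, calA ε A k ℓ Q := if_neg h.ne'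

theorem sum_calA_insert_max (k : ℕ) {ℓ m : ℕ} (h : ℓ < m) :
    ∑ Q ∈ (Ioo ℓ m).powerset, calA ε A k ℓ (insert m Q) =
      ε m * A (m - 1) k m * Cgen ε A m ℓ := by
  rw [Cgen_of_lt ε A h, mul_sum]
  exact sum_congr rfl fun Q hQ =>
    calA_insert_max ε A k ℓ fun j hj => (mem_Ioo.1 (mem_powerset.1 hQ hj)).2

theorem C_succ_one_recurrence_general {k ℓ : ℕ} (h : ℓ ≤ k) :
    Cgen ε A (k + 1) ℓ = ∑ m ∈ Icc ℓ k, ε m * A (m - 1) (k + 1) m * Cgen ε A m ℓ := by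
  have filter_lt (m : ℕ) (hm : m ∈ Ioc ℓ k) : {j ∈ Ioc ℓ k | j < m} = Ioo ℓ m := by
    grind
  calc Cgen ε A (k + 1) ℓ
      = ∑ Q ∈ (Ioc ℓ k).powerset, calA ε A (k + 1) ℓ Q := by
        rw [Cgen_of_lt ε A (Nat.lt_add_one_of_le h), Ioo_add_one_right_eq_Ioc]
    _ = calA ε A (k + 1) ℓ ∅ +
          ∑ m ∈ Ioc ℓ k, ∑ Q ∈ (Ioo ℓ m).powerset, calA ε A (k + 1) ℓ (insert m Q) := by
        rw [sum_powerset_eq_add_sum_insert_max,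
          sum_congr rfl fun m hm => by rw [filter_lt m hm]]
    _ = ε ℓ * A (ℓ - 1) (k + 1) ℓ * Cgen ε A ℓ ℓ +
          ∑ m ∈ Ioc ℓ k, ε m * A (m - 1) (k + 1) m * Cgen ε A m ℓ := by
        rw [calA_empty, Cgen_self, mul_one,
          sum_congr rfl fun m hm => sum_calA_insert_max ε A (k + 1) (mem_Ioc.1 hm).1]
    _ = ∑ m ∈ Icc ℓ k, ε m * A (m - 1) (k + 1) m * Cgen ε A m ℓ :=
        add_sum_Ioc_eq_sum_Icc (f := fun m => ε m * A (m - 1) (k + 1) m * Cgen ε A m ℓ) h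

end Recurrence

/-- For every integer `k ≥ 1`,
`C_{k+1,1} = Σ_{ℓ=1}^{k} ε_ℓ · A^{(ℓ−1)}_{k+1,ℓ} · C_{ℓ,1}` (where `C_{1,1} = 1`). -/
theorem C_succ_one_recurrence {R : Type*} [CommRing R] (ε : ℕ → R) (A : ℕ → ℕ → ℕ → R)
    (k : ℕ) (hk : 1 ≤ k) :
    Cgen ε A (k + 1) 1 = ∑ ℓ ∈ Finset.Icc 1 k, ε ℓ * A (ℓ - 1) (k + 1) ℓ * Cgen ε A ℓ 1 := by
  exact C_succ_one_recurrence_general ε A hk
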